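/- For every α > 1 and s = 1/α there exists a G_δ set F ⊆ ℝ (with the usual metric, Lebesgue measure, and Hausdorff content H^t_∞) such that F belongs to the class G^t(ℝ) for every 0 < t < s, yet F does not belong to G^s(ℝ): indeed there exists a nonempty open ball B ⊆ ℝ with H^s_∞(F ∩ B) = 0. In particular, G^s(ℝ) ≠ ⋂_{0 < t < s} G^t(ℝ). -/

import Mathlib

/-!
The set `F` is a limsup set: the reals that lie, for infinitely many `j`, within `2 rⱼ` of the grid
`δⱼ ℤ`, where `δⱼ = exp (-j²)` and `rⱼ = exp (-α (j² + j))`, so that `rⱼ ^ s = δⱼ exp (-j)` for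
`s = 1 / α`.

Smallness at `s`: for each `N`, `F ∩ ball 0 1` is covered by the `O(1 / δⱼ)` balls of each
generation `j ≥ N` that come near `ball 0 1`, and `∑_{j ≥ N} δⱼ⁻¹ rⱼ ^ s` is the tail of a
geometric series. Hence its `s`-content is zero (`hContent_limsupSet_eq_zero`), while the unit ball
has `s`-content at least `1`, by comparison with Lebesgue measure (`one_le_hContent_ball`).

Largeness at `t < s`: here `rⱼ ^ t / δⱼ → ∞`. If balls of radii `dᵢ` meeting an interval of
radius `ρ` have `∑ dᵢ ^ t < ρ ^ t / 20`, a double count over the grid points of a late generation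
produces a subinterval of radius `rⱼ` with the same property (`exists_light_subball`). Iterating
gives nested intervals whose common point is in `F` and in none of the balls, so a cover of `F`
inside an interval is at least a fixed fraction as expensive as the interval
(`le_localWeight_of_cover`). A Vitali covering argument passes from intervals to an arbitrary open
set (`hContent_le_of_cover`), with a constant independent of `t`.
-/

open MeasureTheory Metric Set ENNReal Filter

noncomputable section

/-- `(X, ϱ, μ)` is Ahlfors regular of dimension `d` with constant `C`:
`C⁻¹ r^d ≤ μ(B(x,r)) ≤ C r^d` for all `x` and `0 < r ≤ diam X`. -/
def AhlforsRegular {X : Type*} [MetricSpace X] [MeasurableSpace X]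
    (μ : Measure X) (d C : ℝ) : Prop :=
  1 ≤ C ∧ ∀ (x : X) (r : ℝ), 0 < r → ENNReal.ofReal r ≤ EMetric.diam (Set.univ : Set X) →
    ENNReal.ofReal (C⁻¹ * r ^ d) ≤ μ (Metric.ball x r) ∧
      μ (Metric.ball x r) ≤ ENNReal.ofReal (C * r ^ d)

/-- The Hausdorff content `H^s_∞(E)`: infimum of `Σ diam(Eₙ)^s` over countable covers of `E`. -/
def hContent {X : Type*} [MetricSpace X] (s : ℝ) (E : Set X) : ℝ≥0∞ :=
  ⨅ (S : Set (Set X)) (_ : S.Countable) (_ : E ⊆ ⋃₀ S),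
    ∑' A : S, EMetric.diam (A : Set X) ^ s

/-- A `G_δ` set `F` belongs to the class `G^s` if there is `0 < c ≤ 1` with
`H^s_∞(F ∩ U) ≥ c · H^s_∞(U)` for every open `U`. -/
def MemGs {X : Type*} [MetricSpace X] (s : ℝ) (F : Set X) : Prop :=
  IsGδ F ∧ ∃ c : ℝ≥0∞, 0 < c ∧ c ≤ 1 ∧
    ∀ U : Set X, IsOpen U → c * hContent s U ≤ hContent s (F ∩ U)

/-! ### Pigeonhole on a grid -/

/-- The part of the weight `∑ dᵢ ^ t` carried by those balls `closedBall (a i) (d i)` that meet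
`closedBall x ρ`; on the line this means `dist (a i) x ≤ d i + ρ`. -/
def localWeight {ι : Type*} (t : ℝ) (a d : ι → ℝ) (x ρ : ℝ) : ℝ :=
  ∑' i, if dist (a i) x ≤ d i + ρ then d i ^ t else 0

lemma card_near_le {δ : ℝ} (hδ : 0 < δ) (a m : ℝ) (hm : 0 ≤ m) (K : Finset ℤ)
    (hK : ∀ k ∈ K, dist a (k * δ) ≤ m) : (K.card : ℝ) ≤ 2 * m / δ + 1 := by
  have hsub : K ⊆ Finset.Icc ⌈(a - m) / δ⌉ ⌊(a + m) / δ⌋ := by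
    intro k hk
    have h := abs_le.1 (Real.dist_eq a (k * δ) ▸ hK k hk)
    rw [Finset.mem_Icc, Int.ceil_le, Int.le_floor, div_le_iff₀ hδ, le_div_iff₀ hδ]
    constructor <;> linarith [h.1, h.2]
  have h1 : (K.card : ℝ) ≤ ((⌊(a + m) / δ⌋ + 1 - ⌈(a - m) / δ⌉).toNat : ℝ) := by
    have := Finset.card_le_card hsub
    rw [Int.card_Icc] at this
    exact_mod_cast this
  have h2 : ((⌊(a + m) / δ⌋ + 1 - ⌈(a - m) / δ⌉).toNat : ℝ)
      = ((max (⌊(a + m) / δ⌋ + 1 - ⌈(a - m) / δ⌉) 0 : ℤ) : ℝ) := by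
    rw [← Int.toNat_eq_max]; norm_cast
  rw [h2] at h1
  push_cast at h1
  refine h1.trans (max_le ?_ (by positivity))
  have h3 := Int.floor_le ((a + m) / δ)
  have h4 := Int.le_ceil ((a - m) / δ)
  have h5 : (a + m) / δ - (a - m) / δ = 2 * m / δ := by ring
  linarith

lemma exists_finset_grid {δ : ℝ} (hδ : 0 < δ) (x ρ : ℝ) (h : 2 * δ ≤ ρ) :
    ∃ K : Finset ℤ, (∀ k ∈ K, dist ((k : ℝ) * δ) x ≤ ρ / 2) ∧ ρ / (2 * δ) ≤ K.card := by
  refine ⟨Finset.Icc ⌈(x - ρ / 2) / δ⌉ ⌊(x + ρ / 2) / δ⌋, ?_, ?_⟩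
  · intro k hk
    rw [Finset.mem_Icc, Int.ceil_le, Int.le_floor, div_le_iff₀ hδ, le_div_iff₀ hδ] at hk
    rw [Real.dist_eq, abs_le]
    constructor <;> linarith [hk.1, hk.2]
  · rw [Int.card_Icc]
    have h1 : ((⌊(x + ρ / 2) / δ⌋ + 1 - ⌈(x - ρ / 2) / δ⌉ : ℤ) : ℝ)
        ≤ ((⌊(x + ρ / 2) / δ⌋ + 1 - ⌈(x - ρ / 2) / δ⌉).toNat : ℝ) := by
      exact_mod_cast Int.self_le_toNat _
    refine le_trans ?_ h1
    push_cast
    have h3 := Int.lt_floor_add_one ((x + ρ / 2) / δ)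
    have h4 := Int.ceil_lt_add_one ((x - ρ / 2) / δ)
    have h5 : (x + ρ / 2) / δ - (x - ρ / 2) / δ = 2 * (ρ / (2 * δ)) := by field_simp; ring
    have h6 : 1 ≤ ρ / (2 * δ) := by rw [le_div_iff₀ (by positivity)]; linarith
    linarith

lemma summable_localWeight {ι : Type*} {t : ℝ} {a d : ι → ℝ} (hd : ∀ i, 0 < d i)
    (hs : Summable fun i => d i ^ t) (x ρ : ℝ) :
    Summable fun i => if dist (a i) x ≤ d i + ρ then d i ^ t else 0 := by
  refine Summable.of_nonneg_of_le (fun i => ?_) (fun i => ?_) hs <;>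
    have := Real.rpow_pos_of_pos (hd i) t <;> split_ifs <;> linarith

lemma rpow_le_localWeight {ι : Type*} {t : ℝ} {a d : ι → ℝ} (hd : ∀ i, 0 < d i)
    (hs : Summable fun i => d i ^ t) {x ρ : ℝ} {i : ι} (h : dist (a i) x ≤ d i + ρ) :
    d i ^ t ≤ localWeight t a d x ρ := by
  have := (summable_localWeight (a := a) hd hs x ρ).le_tsum i (fun j _ => by
    have := Real.rpow_pos_of_pos (hd j) t
    split_ifs <;> linarith)
  simpa only [localWeight, if_pos h] using this

/-- Pigeonhole step. If the balls `closedBall (a i) (d i)` meeting `closedBall x ρ` have total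
weight less than `ρ ^ t / 20`, the same is true for some much smaller ball of radius `r` centred
on the grid `δℤ`, as soon as `r ^ t / δ` is large enough in terms of `ρ`. -/
lemma exists_light_subball {ι : Type*} {t : ℝ} (ht0 : 0 < t) (ht1 : t < 1) {a d : ι → ℝ}
    (hd : ∀ i, 0 < d i) (hs : Summable fun i => d i ^ t) {x ρ δ r : ℝ} (hr : 0 < r)
    (hrδ : r ≤ δ) (hδρ : 2 * δ ≤ ρ) (hbig : 20 * ρ ^ t * δ ≤ r ^ t * ρ)
    (hx : localWeight t a d x ρ < ρ ^ t / 20) :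
    ∃ k : ℤ, closedBall ((k : ℝ) * δ) r ⊆ closedBall x ρ ∧
      localWeight t a d (k * δ) r < r ^ t / 20 := by
  classical
  have hδ : 0 < δ := hr.trans_le hrδ
  have hρ : 0 < ρ := by linarith
  obtain ⟨K, hK, hcard⟩ := exists_finset_grid hδ x ρ hδρ
  have hrt : 0 < r ^ t := Real.rpow_pos_of_pos hr t
  have hρt : 0 < ρ ^ t := Real.rpow_pos_of_pos hρ t
  have hdt : ∀ i, 0 < d i ^ t := fun i => Real.rpow_pos_of_pos (hd i) t
  -- Truncating the weights at `r ^ t / 20` makes large balls harmless in the double count below,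
  -- and a truncated sum below `r ^ t / 20` contains no truncated term.
  set v : ι → ℝ := fun i => min (d i ^ t) (r ^ t / 20) with hv
  have hv0 : ∀ i, 0 ≤ v i := fun i => le_min (hdt i).le (by positivity)
  have hvs : ∀ y : ℝ, Summable fun i => if dist (a i) y ≤ d i + r then v i else 0 := by
    intro y
    refine Summable.of_nonneg_of_le (fun i => ?_) (fun i => ?_) hs
    · split_ifs
      exacts [hv0 i, le_rfl]
    · split_ifs
      exacts [min_le_left _ _, (hdt i).le]
  set M : ℝ := 3 * (r ^ t / 20) * ρ ^ (1 - t) / δ + 3 with hM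
  have hM0 : 0 < M := by positivity
  have hterm : ∀ i, (∑ k ∈ K, if dist (a i) (k * δ) ≤ d i + r then v i else 0)
      ≤ M * (if dist (a i) x ≤ d i + ρ then d i ^ t else 0) := by
    intro i
    rw [← Finset.sum_filter, Finset.sum_const, nsmul_eq_mul]
    split_ifs with hi
    · have hc := card_near_le hδ (a i) (d i + r) (by linarith [hd i])
        (K.filter fun k : ℤ => dist (a i) (k * δ) ≤ d i + r)
        (fun k hk => (Finset.mem_filter.1 hk).2)
      have hc' : 2 * (d i + r) / δ + 1 ≤ 3 * (d i / δ + 1) := by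
        have : r / δ ≤ 1 := (div_le_one hδ).2 hrδ
        have h2 : 0 < d i / δ := div_pos (hd i) hδ
        have h3 : 2 * (d i + r) / δ = 2 * (d i / δ) + 2 * (r / δ) := by ring
        linarith
      have hdρ : d i ≤ ρ := by
        have h1 := rpow_le_localWeight hd hs hi
        exact ((Real.rpow_lt_rpow_iff (hd i).le hρ.le ht0).1 (by linarith)).le
      have hdd : d i ≤ d i ^ t * ρ ^ (1 - t) := by
        calc d i = d i ^ t * d i ^ (1 - t) := by
              rw [← Real.rpow_add (hd i)]; simp
          _ ≤ _ := mul_le_mul_of_nonneg_left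
              (Real.rpow_le_rpow (hd i).le hdρ (by linarith)) (hdt i).le
      calc _ ≤ 3 * (d i / δ + 1) * v i := by
              gcongr
              · exact hv0 i
              · exact hc.trans hc'
        _ = 3 * (v i * d i / δ) + 3 * v i := by ring
        _ ≤ 3 * ((r ^ t / 20) * (d i ^ t * ρ ^ (1 - t)) / δ) + 3 * d i ^ t := by
              gcongr
              · exact (hd i).le
              · exact min_le_right _ _
              · exact min_le_left _ _
        _ = M * d i ^ t := by rw [hM]; ring
    · rw [Finset.filter_eq_empty_iff.2]
      · simp
      · intro k hk hki
        exact hi (by linarith [dist_triangle (a i) (k * δ) x, hK k hk])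
  have htot : ∑ k ∈ K, ∑' i, (if dist (a i) ((k : ℝ) * δ) ≤ d i + r then v i else 0)
      < ∑ k ∈ K, r ^ t / 20 := by
    rw [← Summable.tsum_finsetSum (fun k _ => hvs _), Finset.sum_const, nsmul_eq_mul]
    calc _ ≤ ∑' i, M * (if dist (a i) x ≤ d i + ρ then d i ^ t else 0) :=
            Summable.tsum_le_tsum hterm (summable_sum fun k _ => hvs _)
              ((summable_localWeight hd hs x ρ).mul_left M)
      _ = M * localWeight t a d x ρ := tsum_mul_left
      _ < M * (ρ ^ t / 20) := by gcongr
      _ = 3 / 400 * (r ^ t * (ρ ^ (1 - t) * ρ ^ t) / δ) + 3 / 20 * ρ ^ t := by rw [hM]; ring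
      _ = 3 / 400 * (r ^ t * ρ / δ) + 3 / 20 * ρ ^ t := by
            rw [← Real.rpow_add hρ]; simp
      _ ≤ 3 / 400 * (r ^ t * ρ / δ) + 3 / 20 * (r ^ t * ρ / δ / 20) := by
            gcongr
            rw [le_div_iff₀ (by norm_num), le_div_iff₀ hδ]
            linarith
      _ ≤ ρ / (2 * δ) * (r ^ t / 20) := by
            have h1 : ρ / (2 * δ) * (r ^ t / 20) = 1 / 40 * (r ^ t * ρ / δ) := by
              field_simp; norm_num
            have h2 : 0 < r ^ t * ρ / δ := by positivity
            rw [h1]; linarith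
      _ ≤ _ := by gcongr
  obtain ⟨k, hk, hlt⟩ := Finset.exists_lt_of_sum_lt htot
  refine ⟨k, closedBall_subset_closedBall' (by linarith [hK k hk]), ?_⟩
  refine lt_of_eq_of_lt (tsum_congr fun i => ?_) hlt
  split_ifs with hi
  · by_contra hne
    have h1 : v i = r ^ t / 20 := by
      rcases min_choice (d i ^ t) (r ^ t / 20) with h | h
      · exact absurd h.symm hne
      · exact h
    have h2 := (hvs (k * δ)).le_tsum i (fun j _ => by
      have := hv0 j
      split_ifs <;> linarith)
    rw [if_pos hi, h1] at h2
    linarith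
  · rfl

/-! ### The limsup set and its nested intervals -/

/-- Grid spacing `exp (-j²)` of the `j`-th generation. -/
def gridStep (j : ℕ) : ℝ := Real.exp (-(j : ℝ) ^ 2)

/-- Radius `exp (-α (j² + j))` attached to the `j`-th generation. With `s = 1 / α` one has
`r ^ s = δ * exp (-j)` for the spacing `δ`: just summable at the exponent `s`, while
`r ^ t / δ → ∞` for every `t < s`. -/
def gridRadius (α : ℝ) (j : ℕ) : ℝ := Real.exp (-(α * ((j : ℝ) ^ 2 + j)))

/-- The reals lying within `2 * gridRadius α j` of the grid `gridStep j * ℤ` for infinitely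
many `j`. -/
def limsupSet (α : ℝ) : Set ℝ :=
  ⋂ N : ℕ, ⋃ j ≥ N, ⋃ k : ℤ, ball ((k : ℝ) * gridStep j) (2 * gridRadius α j)

lemma isGδ_limsupSet (α : ℝ) : IsGδ (limsupSet α) :=
  IsGδ.iInter_of_isOpen fun _ => isOpen_biUnion fun _ _ => isOpen_iUnion fun _ => isOpen_ball

lemma gridStep_pos (j : ℕ) : 0 < gridStep j := Real.exp_pos _

lemma gridRadius_pos (α : ℝ) (j : ℕ) : 0 < gridRadius α j := Real.exp_pos _

lemma gridRadius_le_gridStep {α : ℝ} (hα : 1 < α) (j : ℕ) : gridRadius α j ≤ gridStep j := by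
  refine Real.exp_le_exp.2 (neg_le_neg ?_)
  have h1 : (0 : ℝ) ≤ (j : ℝ) ^ 2 := by positivity
  have h2 : (0 : ℝ) ≤ j := by positivity
  nlinarith

lemma tendsto_gridStep : Tendsto gridStep atTop (nhds 0) := by
  refine Real.tendsto_exp_atBot.comp (tendsto_neg_atTop_atBot.comp ?_)
  exact (tendsto_pow_atTop two_ne_zero).comp tendsto_natCast_atTop_atTop

lemma tendsto_gridRadius {α : ℝ} (hα : 1 < α) : Tendsto (gridRadius α) atTop (nhds 0) :=
  squeeze_zero (fun j => (gridRadius_pos α j).le) (gridRadius_le_gridStep hα) tendsto_gridStep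

lemma tendsto_gridRadius_rpow_div {α t : ℝ} (ht : t * α < 1) :
    Tendsto (fun j => gridRadius α j ^ t / gridStep j) atTop atTop := by
  have h : ∀ j : ℕ, gridRadius α j ^ t / gridStep j
      = Real.exp ((j : ℝ) * ((1 - t * α) * j - t * α)) := by
    intro j
    rw [gridRadius, gridStep, ← Real.exp_mul, ← Real.exp_sub]
    congr 1; ring
  simp_rw [h]
  refine Real.tendsto_exp_atTop.comp ?_
  refine tendsto_natCast_atTop_atTop.atTop_mul_atTop₀ ?_
  exact tendsto_atTop_add_const_right _ (-(t * α))
    (tendsto_natCast_atTop_atTop.const_mul_atTop (sub_pos.2 ht))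

/-- Balls covering `limsupSet α ∩ closedBall x ρ` carry weight at least `ρ ^ t / 20` near
`closedBall x ρ`: otherwise iterating `exists_light_subball` yields nested balls shrinking to a
point of `limsupSet α` that no ball of the cover can contain. -/
lemma le_localWeight_of_cover {α : ℝ} (hα : 1 < α) {t : ℝ} (ht0 : 0 < t) (ht : t * α < 1)
    {ι : Type*} {a d : ι → ℝ} (hd : ∀ i, 0 < d i) (hs : Summable fun i => d i ^ t)
    {x ρ : ℝ} (hρ : 0 < ρ) (hcov : limsupSet α ∩ closedBall x ρ ⊆ ⋃ i, closedBall (a i) (d i)) :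
    ρ ^ t / 20 ≤ localWeight t a d x ρ := by
  by_contra! hlt
  have ht1 : t < 1 := by nlinarith
  have hstep : ∀ (n : ℕ) (p : {p : ℝ × ℝ // 0 < p.2 ∧ localWeight t a d p.1 p.2 < p.2 ^ t / 20}),
      ∃ q : {p : ℝ × ℝ // 0 < p.2 ∧ localWeight t a d p.1 p.2 < p.2 ^ t / 20},
        closedBall q.1.1 q.1.2 ⊆ closedBall p.1.1 p.1.2 ∧ q.1.2 < 1 / ((n : ℝ) + 1) ∧
        ∃ j ≥ n, ∃ k : ℤ, closedBall q.1.1 q.1.2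
          ⊆ ball ((k : ℝ) * gridStep j) (2 * gridRadius α j) := by
    rintro n ⟨⟨y, η⟩, hη, hy⟩
    dsimp only at hη hy ⊢
    have e1 := tendsto_gridStep.eventually_lt_const (half_pos hη)
    have e2 := (tendsto_gridRadius hα).eventually_lt_const
      (show (0 : ℝ) < 1 / ((n : ℝ) + 1) by positivity)
    have e3 := (tendsto_gridRadius_rpow_div ht).eventually_ge_atTop (20 * η ^ t / η)
    obtain ⟨j, h1, h2, h3, hj⟩ := (e1.and (e2.and (e3.and (eventually_ge_atTop n)))).exists
    rw [div_le_div_iff₀ hη (gridStep_pos j)] at h3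
    obtain ⟨k, hk, hw⟩ := exists_light_subball ht0 ht1 hd hs (gridRadius_pos α j)
      (gridRadius_le_gridStep hα j) (by linarith) h3 hy
    refine ⟨⟨(k * gridStep j, gridRadius α j), gridRadius_pos α j, hw⟩, hk, h2, j, hj, k, ?_⟩
    exact closedBall_subset_ball (by linarith [gridRadius_pos α j])
  choose f hf1 hf2 hf3 using hstep
  let p : ℕ → {p : ℝ × ℝ // 0 < p.2 ∧ localWeight t a d p.1 p.2 < p.2 ^ t / 20} :=
    fun n => Nat.rec ⟨(x, ρ), hρ, hlt⟩ (fun n q => f n q) n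
  have hp : ∀ n, p (n + 1) = f n (p n) := fun n => rfl
  obtain ⟨z, hz⟩ := IsCompact.nonempty_iInter_of_sequence_nonempty_isCompact_isClosed
    (fun n => closedBall (p n).1.1 (p n).1.2) (fun n => hf1 n (p n))
    (fun n => nonempty_closedBall.2 (p n).2.1.le) (isCompact_closedBall _ _)
    (fun n => isClosed_closedBall)
  rw [mem_iInter] at hz
  have hzF : z ∈ limsupSet α := by
    refine mem_iInter.2 fun N => ?_
    obtain ⟨j, hj, k, hk⟩ := hf3 N (p N)
    exact mem_iUnion₂.2 ⟨j, hj, mem_iUnion.2 ⟨k, hk (hz (N + 1))⟩⟩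
  obtain ⟨i, hi⟩ := mem_iUnion.1 (hcov ⟨hzF, hz 0⟩)
  have hsmall : ∀ n, d i < (p n).1.2 := by
    intro n
    have h1 : d i ^ t ≤ localWeight t a d (p n).1.1 (p n).1.2 := by
      refine rpow_le_localWeight hd hs ?_
      have h2 := mem_closedBall'.1 hi
      have h3 := mem_closedBall.1 (hz n)
      linarith [dist_triangle (a i) z (p n).1.1]
    have h4 := Real.rpow_pos_of_pos (p n).2.1 t
    exact (Real.rpow_lt_rpow_iff (hd i).le (p n).2.1.le ht0).1 (by linarith [(p n).2.2])
  obtain ⟨n, hn⟩ := exists_nat_one_div_lt (hd i)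
  exact lt_irrefl _ ((hsmall (n + 1)).trans ((hf2 n (p n)).trans hn))

/-! ### Smallness at the critical exponent -/

lemma hContent_le_tsum {X : Type*} [MetricSpace X] (s : ℝ) (E : Set X) {ι : Type*} [Countable ι]
    (A : ι → Set X) (hE : E ⊆ ⋃ i, A i) : hContent s E ≤ ∑' i, ediam (A i) ^ s := by
  refine (iInf₂_le (range A) (countable_range A)).trans (iInf_le_of_le (by rwa [sUnion_range]) ?_)
  have hinj : Function.Injective (fun B : range A => B.2.choose) := fun B C h =>
    Subtype.ext (by rw [← B.2.choose_spec, ← C.2.choose_spec]; exact congrArg A h)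
  refine le_trans (le_of_eq (tsum_congr fun B => ?_))
    (ENNReal.tsum_comp_le_tsum_of_injective hinj fun i => ediam (A i) ^ s)
  show ediam (B : Set X) ^ s = ediam (A B.2.choose) ^ s
  rw [B.2.choose_spec]

lemma ediam_closedBall_rpow_le {t : ℝ} (ht0 : 0 < t) (ht1 : t ≤ 1) (y : ℝ) {C η : ℝ}
    (hC : 1 ≤ C) (hη : 0 ≤ η) :
    ediam (closedBall y (C * η)) ^ t ≤ ENNReal.ofReal (2 * C * η ^ t) := by
  rw [Real.closedBall_eq_Icc, Real.ediam_Icc,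
    ENNReal.ofReal_rpow_of_nonneg (by nlinarith) ht0.le]
  refine ENNReal.ofReal_le_ofReal ?_
  rw [show y + C * η - (y - C * η) = 2 * C * η by ring, Real.mul_rpow (by linarith) hη]
  refine mul_le_mul_of_nonneg_right ?_ (Real.rpow_nonneg hη t)
  calc (2 * C) ^ t ≤ (2 * C) ^ (1 : ℝ) := Real.rpow_le_rpow_of_exponent_le (by linarith) ht1
    _ = 2 * C := Real.rpow_one _

lemma one_le_hContent_ball {s : ℝ} (hs0 : 0 < s) (hs : s ≤ 1) :
    1 ≤ hContent s (ball (0 : ℝ) 1) := by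
  refine le_iInf₂ fun S hS => le_iInf fun hcov => ?_
  by_contra! hlt
  have hle : ∀ A : S, ediam (A : Set ℝ) ≤ ediam (A : Set ℝ) ^ s := by
    intro A
    have h1 : ediam (A : Set ℝ) ≤ 1 := by
      by_contra! h
      exact absurd ((ENNReal.le_tsum A).trans_lt hlt) (ENNReal.one_le_rpow h.le hs0).not_gt
    have := ENNReal.rpow_le_rpow_of_exponent_ge h1 hs
    rwa [ENNReal.rpow_one] at this
  have h2 : volume (ball (0 : ℝ) 1) ≤ ∑' A : S, ediam (A : Set ℝ) ^ s := by
    have : Countable S := hS.to_subtype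
    calc volume (ball (0 : ℝ) 1) ≤ volume (⋃ A : S, (A : Set ℝ)) :=
          measure_mono (by rwa [← sUnion_eq_iUnion])
      _ ≤ ∑' A : S, volume (A : Set ℝ) := measure_iUnion_le _
      _ ≤ _ := ENNReal.tsum_le_tsum fun A => (Real.volume_le_diam _).trans (hle A)
  rw [Real.volume_ball] at h2
  have h3 : (1 : ℝ≥0∞) ≤ ENNReal.ofReal (2 * 1) := by
    rw [← ENNReal.ofReal_one]; exact ENNReal.ofReal_le_ofReal (by norm_num)
  exact absurd (h3.trans h2) hlt.not_ge

lemma hContent_limsupSet_eq_zero {α : ℝ} (hα : 1 < α) :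
    hContent (1 / α) (limsupSet α ∩ ball 0 1) = 0 := by
  have hs0 : 0 < 1 / α := by positivity
  have hs1 : 1 / α ≤ 1 := by rw [div_le_one (by linarith)]; exact hα.le
  set f : ℕ → ℝ≥0∞ := fun j => ENNReal.ofReal (28 * Real.exp (-(j : ℝ))) with hf
  have hfsum : ∑' j, f j ≠ ⊤ := (Real.summable_exp_neg_nat.mul_left 28).tsum_ofReal_ne_top
  have key : ∀ N : ℕ, hContent (1 / α) (limsupSet α ∩ ball 0 1) ≤ ∑' j, f (j + N) := by
    intro N
    let K : ℕ → Finset ℤ := fun j => Finset.Icc ⌈-3 / gridStep j⌉ ⌊3 / gridStep j⌋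
    have hK : ∀ j k, k ∈ K j ↔ dist 0 ((k : ℝ) * gridStep j) ≤ 3 := by
      intro j k
      rw [Finset.mem_Icc, Int.ceil_le, Int.le_floor, div_le_iff₀ (gridStep_pos j),
        le_div_iff₀ (gridStep_pos j), dist_comm, Real.dist_eq, sub_zero, abs_le]
    have hstep1 : ∀ j, gridStep j ≤ 1 := fun j => by
      rw [gridStep, Real.exp_le_one_iff, neg_nonpos]; positivity
    let A : (Σ j : ℕ, K (j + N)) → Set ℝ := fun p =>
      closedBall ((p.2.1 : ℝ) * gridStep (p.1 + N)) (2 * gridRadius α (p.1 + N))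
    have hcov : limsupSet α ∩ ball 0 1 ⊆ ⋃ p, A p := by
      rintro x ⟨hxF, hx⟩
      obtain ⟨j, hj, hxj⟩ := mem_iUnion₂.1 (mem_iInter.1 hxF N)
      obtain ⟨k, hk⟩ := mem_iUnion.1 hxj
      obtain ⟨m, rfl⟩ := Nat.exists_eq_add_of_le' hj
      have hkK : k ∈ K (m + N) := by
        rw [hK]
        have h1 := gridRadius_le_gridStep hα (m + N)
        have h2 := hstep1 (m + N)
        have h3 := mem_ball'.1 hx
        have h4 := mem_ball.1 hk
        linarith [dist_triangle 0 x (k * gridStep (m + N))]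
      exact mem_iUnion.2 ⟨⟨m, k, hkK⟩, ball_subset_closedBall hk⟩
    refine (hContent_le_tsum _ _ A hcov).trans ?_
    rw [ENNReal.tsum_sigma']
    refine ENNReal.tsum_le_tsum fun m => ?_
    set j := m + N
    have hr : gridRadius α j ^ (1 / α) = gridStep j * Real.exp (-(j : ℝ)) := by
      rw [gridRadius, gridStep, ← Real.exp_mul, ← Real.exp_add]
      congr 1
      field_simp
      ring
    have hcard : ((K j).card : ℝ) * gridStep j ≤ 7 := by
      have h1 := card_near_le (gridStep_pos j) 0 3 (by norm_num) (K j) fun k hk => (hK j k).1 hk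
      have h2 := mul_le_mul_of_nonneg_right h1 (gridStep_pos j).le
      rw [add_mul, div_mul_cancel₀ _ (gridStep_pos j).ne'] at h2
      linarith [hstep1 j]
    calc ∑' k : K j, ediam (A ⟨m, k⟩) ^ (1 / α)
        ≤ ∑' k : K j, ENNReal.ofReal (2 * 2 * gridRadius α j ^ (1 / α)) :=
          ENNReal.tsum_le_tsum fun k =>
            ediam_closedBall_rpow_le hs0 hs1 _ (by norm_num) (gridRadius_pos α j).le
      _ = ENNReal.ofReal ((K j).card * (2 * 2 * gridRadius α j ^ (1 / α))) := by
          rw [tsum_fintype, Finset.sum_const, nsmul_eq_mul, Finset.card_univ, Fintype.card_coe,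
            ENNReal.ofReal_mul (Nat.cast_nonneg _), ENNReal.ofReal_natCast]
      _ ≤ f j := by
          refine ENNReal.ofReal_le_ofReal ?_
          rw [hr]
          calc _ = 4 * Real.exp (-(j : ℝ)) * ((K j).card * gridStep j) := by ring
            _ ≤ 4 * Real.exp (-(j : ℝ)) * 7 := by gcongr
            _ = _ := by ring
  exact le_antisymm (ge_of_tendsto' (ENNReal.tendsto_sum_nat_add f hfsum) key) zero_le

/-! ### Largeness below the critical exponent -/

lemma ofReal_localWeight {ι : Type*} {t : ℝ} {a d : ι → ℝ} (hd : ∀ i, 0 < d i)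
    (hs : Summable fun i => d i ^ t) (x ρ : ℝ) : ENNReal.ofReal (localWeight t a d x ρ)
      = ∑' i, if dist (a i) x ≤ d i + ρ then ENNReal.ofReal (d i ^ t) else 0 := by
  rw [localWeight, ENNReal.ofReal_tsum_of_nonneg _ (summable_localWeight hd hs x ρ)]
  · refine tsum_congr fun i => ?_
    split_ifs <;> simp
  · intro i
    have := Real.rpow_pos_of_pos (hd i) t
    split_ifs <;> linarith

/-- Covering `limsupSet α ∩ U` is as expensive as covering `U`, up to a constant. Points far
from every covering ball are centres of balls inside `U` whose local weight only counts cover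
balls nearby; a Vitali family of these balls completes the tripled cover to a cover of `U`. -/
lemma hContent_le_of_cover {α : ℝ} (hα : 1 < α) {t : ℝ} (ht0 : 0 < t) (ht : t * α < 1)
    {ι : Type*} [Countable ι] {a d : ι → ℝ} (hd : ∀ i, 0 < d i)
    (hs : Summable fun i => d i ^ t) {U : Set ℝ} (hU : IsOpen U)
    (hcov : limsupSet α ∩ U ⊆ ⋃ i, closedBall (a i) (d i)) :
    hContent t U ≤ 406 * ∑' i, ENNReal.ofReal (d i ^ t) := by
  classical
  have ht1 : t ≤ 1 := by nlinarith
  set T : Set ℝ := {x ∈ U | ∀ i, 3 * d i < dist x (a i)} with hT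
  have hρ : ∀ x, ∃ ρ : ℝ, 0 < ρ ∧ ρ ≤ 1 ∧ (x ∈ U → closedBall x ρ ⊆ U) := by
    intro x
    by_cases hx : x ∈ U
    · obtain ⟨ε, hε, h⟩ := Metric.nhds_basis_closedBall.mem_iff.1 (hU.mem_nhds hx)
      exact ⟨min ε 1, by positivity, min_le_right _ _,
        fun _ => (closedBall_subset_closedBall (min_le_left _ _)).trans h⟩
    · exact ⟨1, one_pos, le_rfl, fun h => absurd h hx⟩
  choose ρ hρ0 hρ1 hρU using hρ
  obtain ⟨u, huT, hdisj, hvit⟩ := Vitali.exists_disjoint_subfamily_covering_enlargement_closedBall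
    T id (fun x => 2 * ρ x) 2 (fun x _ => by linarith [hρ1 x]) 5 (by norm_num)
  have hucount : u.Countable := hdisj.countable_of_nonempty_interior fun x _ =>
    ⟨x, ball_subset_interior_closedBall (mem_ball_self (by linarith [hρ0 x]))⟩
  have : Countable u := hucount.to_subtype
  have hw : ∀ y : u, ENNReal.ofReal (ρ y ^ t)
      ≤ 20 * ∑' i, if a i ∈ closedBall (y : ℝ) (2 * ρ y) then ENNReal.ofReal (d i ^ t) else 0 := by
    intro y
    have hy := huT y.2
    have h1 := le_localWeight_of_cover hα ht0 ht hd hs (hρ0 y)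
      ((inter_subset_inter_right _ (hρU y hy.1)).trans hcov)
    have h2 : ENNReal.ofReal (ρ y ^ t) ≤ 20 * ENNReal.ofReal (localWeight t a d y (ρ y)) := by
      rw [show (20 : ℝ≥0∞) = ENNReal.ofReal 20 by simp, ← ENNReal.ofReal_mul (by norm_num)]
      exact ENNReal.ofReal_le_ofReal (by linarith)
    refine h2.trans ?_
    rw [ofReal_localWeight hd hs]
    gcongr with i
    split_ifs with h3 h4
    · exact le_rfl
    · refine absurd ?_ h4
      have h5 := hy.2 i
      rw [dist_comm] at h5
      rw [mem_closedBall]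
      linarith [hρ0 y]
    · exact zero_le
    · exact le_rfl
  have hsum : ∑' y : u, ENNReal.ofReal (ρ y ^ t) ≤ 20 * ∑' i, ENNReal.ofReal (d i ^ t) := by
    refine (ENNReal.tsum_le_tsum hw).trans ?_
    rw [ENNReal.tsum_mul_left, ENNReal.tsum_comm]
    gcongr with i
    by_cases h : ∃ y : u, a i ∈ closedBall (y : ℝ) (2 * ρ y)
    · obtain ⟨y, hy⟩ := h
      rw [tsum_eq_single y, if_pos hy]
      intro z hzy
      refine if_neg fun hz => ?_
      exact (Set.disjoint_left.1 (hdisj z.2 y.2 (fun e => hzy (Subtype.ext e))) hz) hy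
    · push Not at h
      simp [h]
  let A : ι ⊕ u → Set ℝ := Sum.elim (fun i => closedBall (a i) (3 * d i))
    (fun y => closedBall (y : ℝ) (10 * ρ y))
  have hA : U ⊆ ⋃ p, A p := by
    intro x hx
    by_cases hxT : x ∈ T
    · obtain ⟨y, hy, hsub⟩ := hvit x hxT
      refine mem_iUnion.2 ⟨Sum.inr ⟨y, hy⟩, ?_⟩
      have := hsub (mem_closedBall_self (by linarith [hρ0 x]))
      rw [← mul_assoc] at this
      norm_num at this
      exact this
    · have : ∃ i, dist x (a i) ≤ 3 * d i := by
        by_contra! h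
        exact hxT ⟨hx, h⟩
      obtain ⟨i, hi⟩ := this
      exact mem_iUnion.2 ⟨Sum.inl i, hi⟩
  calc hContent t U ≤ ∑' p, ediam (A p) ^ t := hContent_le_tsum t U A hA
    _ = ∑' i, ediam (closedBall (a i) (3 * d i)) ^ t
        + ∑' y : u, ediam (closedBall (y : ℝ) (10 * ρ y)) ^ t :=
      ENNReal.summable.tsum_sum ENNReal.summable
    _ ≤ ∑' i, 6 * ENNReal.ofReal (d i ^ t) + ∑' y : u, 20 * ENNReal.ofReal (ρ y ^ t) := by
      gcongr with i y
      · refine (ediam_closedBall_rpow_le ht0 ht1 _ (by norm_num) (hd i).le).trans_eq ?_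
        rw [ENNReal.ofReal_mul (by norm_num)]; norm_num
      · refine (ediam_closedBall_rpow_le ht0 ht1 _ (by norm_num) (hρ0 y).le).trans_eq ?_
        rw [ENNReal.ofReal_mul (by norm_num)]; norm_num
    _ ≤ 6 * ∑' i, ENNReal.ofReal (d i ^ t) + 20 * (20 * ∑' i, ENNReal.ofReal (d i ^ t)) := by
      rw [ENNReal.tsum_mul_left, ENNReal.tsum_mul_left]
      gcongr
    _ = 406 * ∑' i, ENNReal.ofReal (d i ^ t) := by ring

lemma hContent_le_hContent_inter {α : ℝ} (hα : 1 < α) {t : ℝ} (ht0 : 0 < t) (ht : t * α < 1)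
    {U : Set ℝ} (hU : IsOpen U) : hContent t U ≤ 406 * hContent t (limsupSet α ∩ U) := by
  have h406 : (406 : ℝ≥0∞) ≠ 0 := by norm_num
  have h406' : (406 : ℝ≥0∞) ≠ ⊤ := by norm_num
  rw [mul_comm, ← ENNReal.div_le_iff_le_mul (Or.inl h406) (Or.inl h406')]
  refine le_iInf₂ fun S hS => le_iInf fun hcov => ?_
  rw [ENNReal.div_le_iff_le_mul (Or.inl h406) (Or.inl h406'), mul_comm]
  change hContent t U ≤ 406 * ∑' A : S, ediam (A : Set ℝ) ^ t
  have : Countable S := hS.to_subtype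
  by_cases htop : ∑' A : S, ediam (A : Set ℝ) ^ t = ⊤
  · rw [htop, ENNReal.mul_top h406]; exact le_top
  have key : ∀ ε : NNReal, 0 < ε →
      hContent t U / 406 ≤ ∑' A : S, ediam (A : Set ℝ) ^ t + ε := by
    intro ε hε
    obtain ⟨e, he0, he⟩ := ENNReal.exists_pos_sum_of_countable
      (ENNReal.coe_ne_zero.2 hε.ne') S
    have hne : ∀ A : S, ediam (A : Set ℝ) ^ t ≠ ⊤ := fun A => ENNReal.ne_top_of_tsum_ne_top htop A
    -- The summand `e A` makes the radius positive even when `A` is a point.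
    set w : S → ℝ := fun A => (ediam (A : Set ℝ) ^ t).toReal + e A with hw
    have hw0 : ∀ A, 0 < w A := fun A =>
      add_pos_of_nonneg_of_pos ENNReal.toReal_nonneg (NNReal.coe_pos.2 (he0 A))
    have hwE : ∀ A, ENNReal.ofReal (w A) = ediam (A : Set ℝ) ^ t + e A := fun A => by
      rw [hw, ENNReal.ofReal_add ENNReal.toReal_nonneg NNReal.zero_le_coe,
        ENNReal.ofReal_toReal (hne A), ENNReal.ofReal_coe_nnreal]
    set d : S → ℝ := fun A => w A ^ t⁻¹ with hd
    have hdt : ∀ A, d A ^ t = w A := fun A => Real.rpow_inv_rpow (hw0 A).le ht0.ne'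
    have hsumE : ∑' A, ENNReal.ofReal (d A ^ t) ≤ ∑' A : S, ediam (A : Set ℝ) ^ t + ε := by
      simp_rw [hdt, hwE]
      rw [ENNReal.tsum_add]
      gcongr
    have hsum : Summable fun A => d A ^ t := by
      have h1 : ∑' A, ENNReal.ofReal (d A ^ t) ≠ ⊤ :=
        ne_top_of_le_ne_top (ENNReal.add_ne_top.2 ⟨htop, ENNReal.coe_ne_top⟩) hsumE
      refine (ENNReal.summable_toReal h1).congr fun A => ?_
      rw [ENNReal.toReal_ofReal]
      rw [hdt]; exact (hw0 A).le
    have hpt : ∀ A : S, ∃ y : ℝ, (A : Set ℝ) ⊆ closedBall y (d A) := by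
      intro A
      rcases (A : Set ℝ).eq_empty_or_nonempty with h | ⟨y, hy⟩
      · exact ⟨0, by simp [h]⟩
      · refine ⟨y, fun z hz => ?_⟩
        have h1 : edist z y ^ t ≤ ENNReal.ofReal (w A) := by
          rw [hwE]
          exact le_add_right (ENNReal.rpow_le_rpow (edist_le_ediam_of_mem hz hy) ht0.le)
        rw [edist_dist, ENNReal.ofReal_rpow_of_nonneg dist_nonneg ht0.le,
          ENNReal.ofReal_le_ofReal_iff (hw0 A).le, ← hdt A] at h1
        exact (Real.rpow_le_rpow_iff dist_nonneg (Real.rpow_nonneg (hw0 A).le _) ht0).1 h1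
    choose a ha using hpt
    rw [ENNReal.div_le_iff_le_mul (Or.inl h406) (Or.inl h406'), mul_comm]
    refine (hContent_le_of_cover hα ht0 ht (a := a) (fun A => Real.rpow_pos_of_pos (hw0 A) _)
      hsum hU ?_).trans (by gcongr)
    rw [sUnion_eq_iUnion] at hcov
    exact hcov.trans (iUnion_mono ha)
  have := ENNReal.le_of_forall_pos_le_add fun ε hε _ => key ε hε
  rwa [ENNReal.div_le_iff_le_mul (Or.inl h406) (Or.inl h406'), mul_comm] at this

/-- For every `α > 1` and `s = 1/α` there is a `G_δ` set `F ⊆ ℝ` belonging to `G^t(ℝ)` for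
every `0 < t < s` but not to `G^s(ℝ)`: indeed `H^s_∞(F ∩ B) = 0` for some nonempty open
ball `B`. In particular `G^s(ℝ) ≠ ⋂_{0 < t < s} G^t(ℝ)`. -/
theorem exists_memGs_lt_not_memGs (α : ℝ) (hα : 1 < α) :
    ∃ F : Set ℝ, IsGδ F ∧ (∀ t : ℝ, 0 < t → t < 1 / α → MemGs t F) ∧
      ¬ MemGs (1 / α) F ∧
      ∃ x R : ℝ, 0 < R ∧ hContent (1 / α) (F ∩ Metric.ball x R) = 0 := by
  refine ⟨limsupSet α, isGδ_limsupSet α, fun t ht0 ht => ⟨isGδ_limsupSet α, 406⁻¹, by simp,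
    ENNReal.inv_le_one.2 (by norm_num), fun U hU => ?_⟩, ?_, 0, 1, one_pos,
    hContent_limsupSet_eq_zero hα⟩
  · rw [lt_div_iff₀ (by linarith)] at ht
    rw [ENNReal.inv_mul_le_iff (by norm_num) (by norm_num)]
    exact hContent_le_hContent_inter hα ht0 ht hU
  · rintro ⟨-, c, hc0, -, h⟩
    have h1 := h (ball 0 1) isOpen_ball
    rw [hContent_limsupSet_eq_zero hα, nonpos_iff_eq_zero, mul_eq_zero] at h1
    have h2 := one_le_hContent_ball (s := 1 / α) (by positivity) (by rw [div_le_one (by linarith)]; exact hα.le)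
    rcases h1 with h1 | h1
    · exact hc0.ne' h1
    · rw [h1] at h2
      exact absurd h2 (by norm_num)
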